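/- Main theorem: distributive laws from a right action L of a monoidal category C on a category 𝓜 to a monad T on 𝓜 are in bijective correspondence with strict monoidal lifts of L along the forgetful functor U : 𝓜^T ⥤ 𝓜. Explicitly, the map sending a distributive law ℓ = {ℓ^Q} to the lift L̃_ℓ determined by L̃_ℓ(Q)(A, ν) = (A ⋄ Q, L(Q)(ν) ∘ ℓ^Q_A) (with morphisms and monoidal structure morphisms lifted identically) is a bijection, whose inverse sends a strict monoidal lift L̃ to the family ℓ^Q_M := σ^Q_{F M} ∘ T(L(Q)(η_M)), where σ^Q_{(A,ν)} is the structure morphism of L̃(Q)(A, ν) and F M = (T M, μ_M) is the free T-algebra. -/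

import Mathlib

/-!
A strict monoidal lift agrees with the action on carriers, on morphisms and on the monoidal
structure; the only free datum is the family of structure morphisms `σ^Q_X` of the algebras
`L̃(Q)(X)`. Hence two lifts are equal as soon as these morphisms are
(`StrictMonoidalLift.ext_σ`).

Given a law `ℓ`, the axioms (D1) and (D3) make `L(Q)(ν) ∘ ℓ^Q_A` an algebra structure, naturality
makes `L(Q)(f)` and `L(g)` algebra morphisms, and (D2), (D4) do the same for `Ψ` and `u`; all
coherence equations then hold because they hold for `L` (`ActionDistribLaw.toLift`).

Conversely, for a lift put `ℓ^Q_A = σ^Q_{F A} ∘ T(L(Q)(η_A))`. Since `ν : F A ⟶ (A, ν)` is an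
algebra morphism, so is its image under `L̃(Q)`, and with `ν ∘ η_A = id` this gives
`L(Q)(ν) ∘ ℓ^Q_A = σ^Q_{(A, ν)}` (`StrictMonoidalLift.law_comp`). This identity shows that the
two constructions compose to the identity on lifts, and it reduces (D1) and (D2) to the
associativity of `σ` and to `Ψ` being an algebra morphism. On laws the composite is the identity
by naturality of `ℓ` and the unit law `μ_A ∘ T(η_A) = id`.

The identity `L̃(Q) ⋙ U = U ⋙ L(Q)` is an equality of functors, so `σ^Q_X` is transported along
`eqToHom` to live on the carrier `X.A ⋄ Q`.
-/

open CategoryTheory MonoidalCategory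

attribute [local instance] CategoryTheory.endofunctorMonoidalCategory

universe v₁ u₁ v₂ u₂

variable {M : Type u₁} [Category.{v₁} M]
variable {C : Type u₂} [Category.{v₂} C] [MonoidalCategory C]

/-- A distributive law from a right action of a monoidal category `C` on `M`
(a strong monoidal functor `L : C ⥤ (M ⥤ M)`, where `M ⥤ M` carries the composition
monoidal structure) to a monad `T` on `M`: a family `ℓ Q A : T (A ⋄ Q) ⟶ (T A) ⋄ Q`
(where `A ⋄ Q := (L.obj Q).obj A`), natural in `A` and in `Q`, satisfying (D1), (D3)
with respect to the monad structure, and (D2), (D4) with respect to the monoidal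
structure isomorphisms `Ψ = Functor.OplaxMonoidal.δ L` and `u = Functor.LaxMonoidal.ε L`
of the action. -/
structure ActionDistribLaw (L : C ⥤ M ⥤ M) [L.Monoidal] (T : Monad M) where
  ℓ : ∀ (Q : C) (A : M),
    (T : M ⥤ M).obj ((L.obj Q).obj A) ⟶ (L.obj Q).obj ((T : M ⥤ M).obj A)
  natM : ∀ (Q : C) {A B : M} (f : A ⟶ B),
    (T : M ⥤ M).map ((L.obj Q).map f) ≫ ℓ Q B = ℓ Q A ≫ (L.obj Q).map ((T : M ⥤ M).map f)
  d1 : ∀ (Q : C) (A : M),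
    (T : M ⥤ M).map (ℓ Q A) ≫ ℓ Q ((T : M ⥤ M).obj A) ≫ (L.obj Q).map (T.μ.app A)
      = T.μ.app ((L.obj Q).obj A) ≫ ℓ Q A
  d3 : ∀ (Q : C) (A : M),
    T.η.app ((L.obj Q).obj A) ≫ ℓ Q A = (L.obj Q).map (T.η.app A)
  natQ : ∀ {Q Q' : C} (g : Q ⟶ Q') (A : M),
    ℓ Q A ≫ (L.map g).app ((T : M ⥤ M).obj A)
      = (T : M ⥤ M).map ((L.map g).app A) ≫ ℓ Q' A
  d2 : ∀ (Q Q' : C) (A : M),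
    ℓ (Q ⊗ Q') A ≫ (Functor.OplaxMonoidal.δ L Q Q').app ((T : M ⥤ M).obj A)
      = (T : M ⥤ M).map ((Functor.OplaxMonoidal.δ L Q Q').app A)
        ≫ ℓ Q' ((L.obj Q).obj A) ≫ (L.obj Q').map (ℓ Q A)
  d4 : ∀ A : M,
    (T : M ⥤ M).map ((Functor.LaxMonoidal.ε L).app A) ≫ ℓ (𝟙_ C) A
      = (Functor.LaxMonoidal.ε L).app ((T : M ⥤ M).obj A)
/-- A strict monoidal lift of a right action `L : C ⥤ (M ⥤ M)` (a strong monoidal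
functor for the composition monoidal structure) along the forgetful functor
`U = T.forget : 𝓜^T ⥤ 𝓜`: a strong monoidal functor `L̃ : C ⥤ (𝓜^T ⥤ 𝓜^T)` such that
`L̃(Q) ⋙ U = U ⋙ L(Q)` for every object `Q`, `U (L̃(g)_X) = L(g)_{X.A}` for every
morphism `g` of `C`, and `U` sends the monoidal structure isomorphisms
(`ε` and `δ = Ψ`) of `L̃` to those of `L`. -/
structure StrictMonoidalLift (L : C ⥤ M ⥤ M) [L.Monoidal] (T : Monad M) where
  lift : C ⥤ T.Algebra ⥤ T.Algebra
  monoidal : lift.Monoidal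
  strict : ∀ Q : C, lift.obj Q ⋙ T.forget = T.forget ⋙ L.obj Q
  strict_map : ∀ {Q Q' : C} (g : Q ⟶ Q') (X : T.Algebra),
    ((lift.map g).app X).f
      = eqToHom (Functor.congr_obj (strict Q) X) ≫ (L.map g).app X.A
          ≫ eqToHom (Functor.congr_obj (strict Q') X).symm
  strict_ε : ∀ X : T.Algebra,
    (letI := monoidal; ((Functor.LaxMonoidal.ε lift).app X).f)
      = (Functor.LaxMonoidal.ε L).app X.A
          ≫ eqToHom (Functor.congr_obj (strict (𝟙_ C)) X).symm
  strict_δ : ∀ (Q Q' : C) (X : T.Algebra),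
    (letI := monoidal; ((Functor.OplaxMonoidal.δ lift Q Q').app X).f)
      = eqToHom (Functor.congr_obj (strict (Q ⊗ Q')) X)
          ≫ (Functor.OplaxMonoidal.δ L Q Q').app X.A
          ≫ eqToHom ((Functor.congr_obj (strict Q') ((lift.obj Q).obj X)).trans
              (congrArg (L.obj Q').obj (Functor.congr_obj (strict Q) X))).symm

section

open Functor.LaxMonoidal Functor.OplaxMonoidal

variable {L : C ⥤ M ⥤ M} [L.Monoidal] {T : Monad M}

/-! ### From distributive laws to lifts -/

namespace ActionDistribLaw

variable (d : ActionDistribLaw L T)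

theorem natM_assoc (Q : C) {A B Z : M} (f : A ⟶ B)
    (k : (L.obj Q).obj ((T : M ⥤ M).obj B) ⟶ Z) :
    (T : M ⥤ M).map ((L.obj Q).map f) ≫ d.ℓ Q B ≫ k
      = d.ℓ Q A ≫ (L.obj Q).map ((T : M ⥤ M).map f) ≫ k := by
  simpa only [Category.assoc] using congrArg (· ≫ k) (d.natM Q f)

theorem d1_assoc (Q : C) (A : M) {Z : M} (k : (L.obj Q).obj ((T : M ⥤ M).obj A) ⟶ Z) :
    (T : M ⥤ M).map (d.ℓ Q A) ≫ d.ℓ Q ((T : M ⥤ M).obj A) ≫ (L.obj Q).map (T.μ.app A) ≫ k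
      = T.μ.app ((L.obj Q).obj A) ≫ d.ℓ Q A ≫ k := by
  simpa only [Category.assoc] using congrArg (· ≫ k) (d.d1 Q A)

theorem d3_assoc (Q : C) (A : M) {Z : M} (k : (L.obj Q).obj ((T : M ⥤ M).obj A) ⟶ Z) :
    T.η.app ((L.obj Q).obj A) ≫ d.ℓ Q A ≫ k = (L.obj Q).map (T.η.app A) ≫ k := by
  simpa only [Category.assoc] using congrArg (· ≫ k) (d.d3 Q A)

theorem natQ_assoc {Q Q' : C} (g : Q ⟶ Q') (A : M) {Z : M}
    (k : (L.obj Q').obj ((T : M ⥤ M).obj A) ⟶ Z) :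
    d.ℓ Q A ≫ (L.map g).app ((T : M ⥤ M).obj A) ≫ k
      = (T : M ⥤ M).map ((L.map g).app A) ≫ d.ℓ Q' A ≫ k := by
  simpa only [Category.assoc] using congrArg (· ≫ k) (d.natQ g A)

theorem d2_assoc (Q Q' : C) (A : M) {Z : M}
    (k : (L.obj Q').obj ((L.obj Q).obj ((T : M ⥤ M).obj A)) ⟶ Z) :
    d.ℓ (Q ⊗ Q') A ≫ (δ L Q Q').app ((T : M ⥤ M).obj A) ≫ k
      = (T : M ⥤ M).map ((δ L Q Q').app A) ≫ d.ℓ Q' ((L.obj Q).obj A) ≫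
          (L.obj Q').map (d.ℓ Q A) ≫ k := by
  have h := congrArg (· ≫ k) (d.d2 Q Q' A)
  exact (Category.assoc _ _ _).symm.trans (h.trans ((Category.assoc _ _ _).trans
    (congrArg _ (Category.assoc _ _ _))))

theorem d4_assoc (A : M) {Z : M}
    (k : (L.obj (𝟙_ C)).obj ((T : M ⥤ M).obj A) ⟶ Z) :
    (T : M ⥤ M).map ((ε L).app A) ≫ d.ℓ (𝟙_ C) A ≫ k
      = (ε L).app ((T : M ⥤ M).obj A) ≫ k := by
  have h := congrArg (· ≫ k) (d.d4 A)
  exact (Category.assoc _ _ _).symm.trans h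

/-- The algebra `(A ⋄ Q, L(Q)(ν) ∘ ℓ^Q_A)`. -/
abbrev liftAlg (Q : C) (X : T.Algebra) : T.Algebra where
  A := (L.obj Q).obj X.A
  a := d.ℓ Q X.A ≫ (L.obj Q).map X.a
  unit := by
    have h := d.d3_assoc Q X.A ((L.obj Q).map X.a)
    rw [← Functor.map_comp, X.unit] at h
    exact h.trans ((L.obj Q).map_id X.A)
  assoc := by
    rw [← d.d1_assoc, ← Functor.map_comp, X.assoc, Functor.map_comp, Functor.map_comp,
      Category.assoc, d.natM_assoc]

/-- `L(Q)` as an endofunctor of `T`-algebras. -/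
abbrev liftObj (Q : C) : T.Algebra ⥤ T.Algebra where
  obj X := d.liftAlg Q X
  map {X Y} f :=
    { f := (L.obj Q).map f.f
      h := by
        change (T : M ⥤ M).map ((L.obj Q).map f.f) ≫ d.ℓ Q Y.A ≫ (L.obj Q).map Y.a
          = (d.ℓ Q X.A ≫ (L.obj Q).map X.a) ≫ (L.obj Q).map f.f
        rw [d.natM_assoc, Category.assoc, ← Functor.map_comp, ← Functor.map_comp, f.h] }

/-- The underlying functor of the lift of the action. -/
abbrev liftFunctor : C ⥤ T.Algebra ⥤ T.Algebra where
  obj Q := d.liftObj Q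
  map {Q Q'} g :=
    { app := fun X =>
        { f := (L.map g).app X.A
          h := by
            change (T : M ⥤ M).map ((L.map g).app X.A) ≫ d.ℓ Q' X.A ≫ (L.obj Q').map X.a
              = (d.ℓ Q X.A ≫ (L.obj Q).map X.a) ≫ (L.map g).app X.A
            rw [← d.natQ_assoc, Category.assoc, NatTrans.naturality] } }

/-- The lift of the unit isomorphism. -/
def liftε : 𝟙_ (T.Algebra ⥤ T.Algebra) ≅ d.liftFunctor.obj (𝟙_ C) :=
  NatIso.ofComponents (fun X => Monad.Algebra.isoMk ((Functor.Monoidal.εIso L).app X.A) (by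
      change (T : M ⥤ M).map ((ε L).app X.A) ≫ d.ℓ (𝟙_ C) X.A ≫ (L.obj (𝟙_ C)).map X.a
        = X.a ≫ (ε L).app X.A
      rw [d.d4_assoc, CategoryTheory.ε_naturality]))
    (fun f => by ext; exact (ε L).naturality f.f)

/-- The lift of `Ψ`, the inverse of the tensorator. -/
def liftδ (Q Q' : C) :
    d.liftFunctor.obj (Q ⊗ Q') ≅ d.liftFunctor.obj Q ⊗ d.liftFunctor.obj Q' :=
  NatIso.ofComponents (fun X => Monad.Algebra.isoMk
    ((Functor.Monoidal.μIso L Q Q').symm.app X.A) (by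
      change (T : M ⥤ M).map ((δ L Q Q').app X.A) ≫ d.ℓ Q' ((L.obj Q).obj X.A) ≫
          (L.obj Q').map (d.ℓ Q X.A ≫ (L.obj Q).map X.a)
        = (d.ℓ (Q ⊗ Q') X.A ≫ (L.obj (Q ⊗ Q')).map X.a) ≫ (δ L Q Q').app X.A
      rw [Category.assoc, ← CategoryTheory.δ_naturality, d.d2_assoc, Functor.map_comp]))
    (fun f => by ext; exact (δ L Q Q').naturality f.f)

/-- The lifted action is strong monoidal. -/
abbrev liftMonoidal : d.liftFunctor.Monoidal :=
  Functor.CoreMonoidal.toMonoidal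
    { εIso := d.liftε
      μIso := fun Q Q' => (d.liftδ Q Q').symm
      μIso_hom_natural_left := fun f Q => by
        ext X
        exact μ_naturalityₗ L f X.A
      μIso_hom_natural_right := fun Q f => by
        ext X
        exact μ_naturalityᵣ L f X.A
      associativity := fun P Q R => by
        ext X
        exact congr_app (Functor.LaxMonoidal.associativity L P Q R) X.A
      left_unitality := fun Q => by
        ext X
        exact congr_app (Functor.LaxMonoidal.left_unitality L Q) X.A
      right_unitality := fun Q => by
        ext X
        exact congr_app (Functor.LaxMonoidal.right_unitality L Q) X.A }

/-- The strict monoidal lift attached to a distributive law. Every `eqToHom` in the conditions is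
definitionally an identity, because carriers are lifted on the nose. -/
def toLift : StrictMonoidalLift L T where
  lift := d.liftFunctor
  monoidal := d.liftMonoidal
  strict _ := rfl
  strict_map g X := by
    exact ((Category.id_comp _).trans (Category.comp_id _)).symm
  strict_ε X := by
    exact (Category.comp_id _).symm
  strict_δ Q Q' X := by
    exact ((Category.id_comp _).trans (Category.comp_id _)).symm

end ActionDistribLaw

/-! ### From lifts to distributive laws -/

namespace StrictMonoidalLift

variable (lf : StrictMonoidalLift L T)

theorem obj_A (Q : C) (X : T.Algebra) : ((lf.lift.obj Q).obj X).A = (L.obj Q).obj X.A :=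
  Functor.congr_obj (lf.strict Q) X

/-- The structure morphism of `L̃(Q)(X)`, transported to the carrier `X.A ⋄ Q`. -/
def σ (Q : C) (X : T.Algebra) :
    (T : M ⥤ M).obj ((L.obj Q).obj X.A) ⟶ (L.obj Q).obj X.A :=
  eqToHom (congrArg (T : M ⥤ M).obj (lf.obj_A Q X)).symm ≫ ((lf.lift.obj Q).obj X).a ≫
    eqToHom (lf.obj_A Q X)

theorem map_f (Q : C) {X Y : T.Algebra} (f : X ⟶ Y) :
    ((lf.lift.obj Q).map f).f = eqToHom (lf.obj_A Q X) ≫ (L.obj Q).map f.f ≫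
      eqToHom (lf.obj_A Q Y).symm :=
  Functor.congr_hom (lf.strict Q) f

/-- A morphism between two algebras, transported along equalities of carriers, still commutes
with the transported structure morphisms. -/
theorem hom_transport {X Y : T.Algebra} {A B : M} (hA : X.A = A) (hB : Y.A = B)
    (f : X ⟶ Y) (g : A ⟶ B) (h : f.f = eqToHom hA ≫ g ≫ eqToHom hB.symm) :
    (T : M ⥤ M).map g ≫ (eqToHom (congrArg (T : M ⥤ M).obj hB).symm ≫ Y.a ≫ eqToHom hB)
      = (eqToHom (congrArg (T : M ⥤ M).obj hA).symm ≫ X.a ≫ eqToHom hA) ≫ g := by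
  subst hA hB
  simp only [eqToHom_refl, Category.id_comp, Category.comp_id] at h ⊢
  rw [← h, f.h]

/-- The algebra `L̃(Q)(X)` with its carrier replaced by `X.A ⋄ Q`. -/
abbrev alg (Q : C) (X : T.Algebra) : T.Algebra where
  A := (L.obj Q).obj X.A
  a := lf.σ Q X
  unit := by
    have h : ∀ (Y : T.Algebra) (B : M) (hB : Y.A = B), T.η.app B ≫
        (eqToHom (congrArg (T : M ⥤ M).obj hB).symm ≫ Y.a ≫ eqToHom hB) = 𝟙 B := by
      rintro Y _ rfl
      simpa using Y.unit
    exact h _ _ _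
  assoc := by
    have h : ∀ (Y : T.Algebra) (B : M) (hB : Y.A = B), T.μ.app B ≫
        (eqToHom (congrArg (T : M ⥤ M).obj hB).symm ≫ Y.a ≫ eqToHom hB) =
        (T : M ⥤ M).map (eqToHom (congrArg (T : M ⥤ M).obj hB).symm ≫ Y.a ≫ eqToHom hB) ≫
        (eqToHom (congrArg (T : M ⥤ M).obj hB).symm ≫ Y.a ≫ eqToHom hB) := by
      rintro Y _ rfl
      simpa using Y.assoc
    exact h _ _ _

/-- Algebras with equal carriers and matching structure morphisms are equal. -/
theorem alg_ext {X Y : T.Algebra} (hA : X.A = Y.A)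
    (h : X.a = eqToHom (congrArg (T : M ⥤ M).obj hA) ≫ Y.a ≫ eqToHom hA.symm) : X = Y := by
  obtain ⟨A, a, _, _⟩ := X
  obtain ⟨B, b, _, _⟩ := Y
  obtain rfl : A = B := hA
  simp only [eqToHom_refl, Category.id_comp, Category.comp_id] at h
  subst h
  rfl

theorem obj_eq_alg (Q : C) (X : T.Algebra) : (lf.lift.obj Q).obj X = lf.alg Q X :=
  alg_ext (lf.obj_A Q X) (by
    simp only [σ, Category.assoc, eqToHom_trans, eqToHom_trans_assoc, eqToHom_refl,
      Category.id_comp, Category.comp_id])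

/-- `L̃(Q)(f)` is an algebra morphism for the transported structures. -/
theorem σ_hom (Q : C) {X Y : T.Algebra} (f : X ⟶ Y) :
    (T : M ⥤ M).map ((L.obj Q).map f.f) ≫ lf.σ Q Y = lf.σ Q X ≫ (L.obj Q).map f.f :=
  hom_transport _ _ _ _ (lf.map_f Q f)

/-- `L̃(g)_X` is an algebra morphism for the transported structures. -/
theorem σ_natQ {Q Q' : C} (g : Q ⟶ Q') (X : T.Algebra) :
    (T : M ⥤ M).map ((L.map g).app X.A) ≫ lf.σ Q' X = lf.σ Q X ≫ (L.map g).app X.A :=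
  hom_transport _ _ _ _ (lf.strict_map g X)

/-- The lifted unit is an algebra morphism for the transported structures. -/
theorem σ_ε (X : T.Algebra) :
    (T : M ⥤ M).map ((ε L).app X.A) ≫ lf.σ (𝟙_ C) X = X.a ≫ (ε L).app X.A := by
  let := lf.monoidal
  have h := hom_transport (X := X) rfl (lf.obj_A (𝟙_ C) X) ((ε lf.lift).app X) ((ε L).app X.A)
    ((lf.strict_ε X).trans (Category.id_comp _).symm)
  refine h.trans ?_
  congr 1
  exact (Category.id_comp _).trans (Category.comp_id _)

/-- `Ψ` is an algebra morphism for the transported structures; on the target the structure is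
obtained by acting twice. -/
theorem σ_δ (Q Q' : C) (X : T.Algebra) :
    (T : M ⥤ M).map ((δ L Q Q').app X.A) ≫ lf.σ Q' (lf.alg Q X)
      = lf.σ (Q ⊗ Q') X ≫ (δ L Q Q').app X.A := by
  let := lf.monoidal
  have hA : ((lf.lift.obj Q').obj ((lf.lift.obj Q).obj X)).A
      = (L.obj Q').obj ((L.obj Q).obj X.A) :=
    (lf.obj_A Q' _).trans (congrArg (L.obj Q').obj (lf.obj_A Q X))
  have h := hom_transport (lf.obj_A (Q ⊗ Q') X) hA ((δ lf.lift Q Q').app X) ((δ L Q Q').app X.A)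
    (lf.strict_δ Q Q' X)
  refine Eq.trans ?_ h
  congr 1
  -- both sides are the structure morphism of `L̃(Q')` at two equal algebras
  have key : ∀ (Y Z : T.Algebra) (e : Y = Z) (h : ((lf.lift.obj Q').obj Y).A =
      (L.obj Q').obj Z.A), lf.σ Q' Z =
        eqToHom (congrArg (T : M ⥤ M).obj h).symm ≫ ((lf.lift.obj Q').obj Y).a ≫ eqToHom h := by
    rintro Y _ rfl h
    rfl
  exact key _ _ (lf.obj_eq_alg Q X) _

/-- The structure morphism `σ^Q_{F A}` at the free algebra `F A`. -/
def σF (Q : C) (A : M) :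
    (T : M ⥤ M).obj ((L.obj Q).obj ((T : M ⥤ M).obj A)) ⟶
      (L.obj Q).obj ((T : M ⥤ M).obj A) :=
  lf.σ Q (T.free.obj A)

/-- The family `σ^Q_{F A} ∘ T(L(Q)(η_A))`. -/
def law (Q : C) (A : M) :
    (T : M ⥤ M).obj ((L.obj Q).obj A) ⟶ (L.obj Q).obj ((T : M ⥤ M).obj A) :=
  (T : M ⥤ M).map ((L.obj Q).map (T.η.app A)) ≫ lf.σF Q A

/-- The family `law` determines all structure morphisms of the lift: apply `L̃(Q)` to the
algebra morphism `ν : F A ⟶ (A, ν)` and use `ν ∘ η_A = id`. -/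
theorem law_comp (Q : C) (X : T.Algebra) :
    lf.law Q X.A ≫ (L.obj Q).map X.a = lf.σ Q X := by
  have h : (T : M ⥤ M).map ((L.obj Q).map X.a) ≫ lf.σ Q X
      = lf.σF Q X.A ≫ (L.obj Q).map X.a :=
    lf.σ_hom Q (X := T.free.obj X.A) (Y := X) { f := X.a, h := X.assoc.symm }
  rw [law, Category.assoc, ← h, ← Functor.map_comp_assoc, ← Functor.map_comp, X.unit,
    CategoryTheory.Functor.map_id, CategoryTheory.Functor.map_id, Category.id_comp]

theorem law_nat (Q : C) {A B : M} (f : A ⟶ B) :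
    (T : M ⥤ M).map ((L.obj Q).map f) ≫ lf.law Q B
      = lf.law Q A ≫ (L.obj Q).map ((T : M ⥤ M).map f) := by
  have h : (T : M ⥤ M).map ((L.obj Q).map ((T : M ⥤ M).map f)) ≫ lf.σF Q B
      = lf.σF Q A ≫ (L.obj Q).map ((T : M ⥤ M).map f) :=
    lf.σ_hom Q (T.free.map f)
  have hη : f ≫ T.η.app B = T.η.app A ≫ (T : M ⥤ M).map f := T.η.naturality f
  rw [law, law, Category.assoc, ← h, ← Functor.map_comp_assoc, ← Functor.map_comp_assoc,
    ← Functor.map_comp, ← Functor.map_comp, hη]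

theorem law_nat_assoc (Q : C) {A B Z : M} (f : A ⟶ B)
    (k : (L.obj Q).obj ((T : M ⥤ M).obj B) ⟶ Z) :
    (T : M ⥤ M).map ((L.obj Q).map f) ≫ lf.law Q B ≫ k
      = lf.law Q A ≫ (L.obj Q).map ((T : M ⥤ M).map f) ≫ k := by
  simpa only [Category.assoc] using congrArg (· ≫ k) (lf.law_nat Q f)

/-- The distributive law attached to a strict monoidal lift. -/
def toLaw : ActionDistribLaw L T where
  ℓ := lf.law
  natM Q _ _ f := lf.law_nat Q f
  d1 Q A := by
    have h : lf.law Q ((T : M ⥤ M).obj A) ≫ (L.obj Q).map (T.μ.app A) = lf.σF Q A :=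
      lf.law_comp Q (T.free.obj A)
    have h2 : T.μ.app ((L.obj Q).obj ((T : M ⥤ M).obj A)) ≫ lf.σF Q A
        = (T : M ⥤ M).map (lf.σF Q A) ≫ lf.σF Q A := (lf.alg Q (T.free.obj A)).assoc
    have hμ : (T : M ⥤ M).map ((T : M ⥤ M).map ((L.obj Q).map (T.η.app A))) ≫
        T.μ.app ((L.obj Q).obj ((T : M ⥤ M).obj A))
        = T.μ.app ((L.obj Q).obj A) ≫ (T : M ⥤ M).map ((L.obj Q).map (T.η.app A)) :=
      T.μ.naturality ((L.obj Q).map (T.η.app A))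
    rw [h, law, Functor.map_comp, Category.assoc, ← h2, ← Category.assoc, hμ, Category.assoc]
  d3 Q A := by
    have h2 : T.η.app ((L.obj Q).obj ((T : M ⥤ M).obj A)) ≫ lf.σF Q A
        = 𝟙 ((L.obj Q).obj ((T : M ⥤ M).obj A)) :=
      (lf.alg Q (T.free.obj A)).unit
    have hη : (L.obj Q).map (T.η.app A) ≫ T.η.app ((L.obj Q).obj ((T : M ⥤ M).obj A))
        = T.η.app ((L.obj Q).obj A) ≫ (T : M ⥤ M).map ((L.obj Q).map (T.η.app A)) :=
      T.η.naturality ((L.obj Q).map (T.η.app A))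
    rw [law, ← Category.assoc, ← hη, Category.assoc, h2, Category.comp_id]
  natQ {Q Q'} g A := by
    have h : (T : M ⥤ M).map ((L.map g).app ((T : M ⥤ M).obj A)) ≫ lf.σF Q' A
        = lf.σF Q A ≫ (L.map g).app ((T : M ⥤ M).obj A) := lf.σ_natQ g (T.free.obj A)
    have hg : (L.obj Q).map (T.η.app A) ≫ (L.map g).app ((T : M ⥤ M).obj A)
        = (L.map g).app A ≫ (L.obj Q').map (T.η.app A) := (L.map g).naturality (T.η.app A)
    rw [law, law, Category.assoc, ← h, ← Functor.map_comp_assoc, ← Functor.map_comp_assoc, hg]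
  d2 Q Q' A := by
    have h : (T : M ⥤ M).map ((δ L Q Q').app ((T : M ⥤ M).obj A)) ≫
          lf.σ Q' (lf.alg Q (T.free.obj A))
        = lf.σF (Q ⊗ Q') A ≫ (δ L Q Q').app ((T : M ⥤ M).obj A) := lf.σ_δ Q Q' (T.free.obj A)
    have h2 : lf.law Q' ((L.obj Q).obj ((T : M ⥤ M).obj A)) ≫ (L.obj Q').map (lf.σF Q A)
        = lf.σ Q' (lf.alg Q (T.free.obj A)) := lf.law_comp Q' (lf.alg Q (T.free.obj A))
    have hδ : (δ L Q Q').app A ≫ (L.obj Q').map ((L.obj Q).map (T.η.app A))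
        = (L.obj (Q ⊗ Q')).map (T.η.app A) ≫ (δ L Q Q').app ((T : M ⥤ M).obj A) :=
      CategoryTheory.δ_naturality L (T.η.app A)
    have h3 : (L.obj Q').map (lf.law Q A)
        = (L.obj Q').map ((T : M ⥤ M).map ((L.obj Q).map (T.η.app A))) ≫
          (L.obj Q').map (lf.σF Q A) := Functor.map_comp _ _ _
    have h4 : lf.law (Q ⊗ Q') A ≫ (δ L Q Q').app ((T : M ⥤ M).obj A)
        = (T : M ⥤ M).map ((L.obj (Q ⊗ Q')).map (T.η.app A)) ≫
          lf.σF (Q ⊗ Q') A ≫ (δ L Q Q').app ((T : M ⥤ M).obj A) := Category.assoc _ _ _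
    refine h4.trans ?_
    rw [h3, ← lf.law_nat_assoc, h2, ← h]
    exact (Functor.map_comp_assoc _ _ _ _).symm.trans
      ((congrArg (fun k => (T : M ⥤ M).map k ≫ _) hδ.symm).trans (Functor.map_comp_assoc _ _ _ _))
  d4 A := by
    have h : (T : M ⥤ M).map ((ε L).app ((T : M ⥤ M).obj A)) ≫ lf.σF (𝟙_ C) A
        = T.μ.app A ≫ (ε L).app ((T : M ⥤ M).obj A) := lf.σ_ε (T.free.obj A)
    rw [law, ← Functor.map_comp_assoc, CategoryTheory.ε_naturality, Functor.map_comp,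
      Category.assoc, h]
    exact (Category.assoc _ _ _).symm.trans
      ((congrArg (· ≫ (ε L).app ((T : M ⥤ M).obj A)) (T.right_unit A)).trans
        (Category.id_comp _))

/-! ### Lifts are determined by their structure morphisms -/

/-- Two monoidal structures on a functor with the same unit morphism and the same cotensorators
agree: the tensorators are inverse to the cotensorators. -/
theorem monoidal_ext {D : Type*} [Category D] [MonoidalCategory D] (F : C ⥤ D)
    (m m' : F.Monoidal)
    (hε : (letI := m; ε F) = (letI := m'; ε F))
    (hδ : ∀ Q Q', (letI := m; δ F Q Q') = (letI := m'; δ F Q Q')) : m = m' := by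
  apply Functor.Monoidal.toLaxMonoidal_injective
  apply Functor.LaxMonoidal.ext
  · exact hε
  · funext Q Q'
    have h1 := m.δ_μ Q Q'
    have h2 := m'.μ_δ Q Q'
    have h := hδ Q Q'
    calc m.μ Q Q' = (m'.μ Q Q' ≫ m'.δ Q Q') ≫ m.μ Q Q' := by rw [h2, Category.id_comp]
      _ = m'.μ Q Q' := by rw [← h, Category.assoc, h1, Category.comp_id]

/-- Everything in a strict monoidal lift except the structure morphisms is prescribed by the
action, so these morphisms determine the lift. -/
theorem ext_σ {lf lf' : StrictMonoidalLift L T} (h : ∀ Q X, lf.σ Q X = lf'.σ Q X) :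
    lf = lf' := by
  have hobj : ∀ Q X, (lf.lift.obj Q).obj X = (lf'.lift.obj Q).obj X := fun Q X => by
    rw [obj_eq_alg, obj_eq_alg]
    exact alg_ext rfl (by simpa using h Q X)
  have eqToHom_f : ∀ {X Y : T.Algebra} (e : X = Y), (eqToHom e).f =
      eqToHom (congrArg Monad.Algebra.A e) := by
    rintro X _ rfl
    rfl
  have hQ : ∀ Q, lf.lift.obj Q = lf'.lift.obj Q := fun Q =>
    CategoryTheory.Functor.ext (hobj Q) (fun X Y f => by
      ext
      simp [map_f, eqToHom_f])
  have hlift : lf.lift = lf'.lift :=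
    CategoryTheory.Functor.ext hQ (fun Q Q' g => by
      ext X
      have key : ∀ {A A' P B B' R : M} (p : A = P) (q : R = B) (a : A = A') (p' : A' = P)
          (q' : R = B') (b : B' = B) (k : P ⟶ R), eqToHom p ≫ k ≫ eqToHom q
            = eqToHom a ≫ (eqToHom p' ≫ k ≫ eqToHom q') ≫ eqToHom b := by
        rintro _ _ _ _ _ _ rfl rfl rfl _ rfl _ k
        simp
      simp only [strict_map, eqToHom_f, eqToHom_app, NatTrans.comp_app, Monad.Algebra.comp_f]
      exact key _ _ _ _ _ _ _)
  obtain ⟨F, m, s, sm, sε, sδ⟩ := lf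
  obtain ⟨F', m', s', sm', sε', sδ'⟩ := lf'
  obtain rfl : F = F' := hlift
  obtain rfl : m = m' := monoidal_ext F m m'
    (by ext X; exact (sε X).trans (sε' X).symm)
    (fun Q Q' => by ext X; exact (sδ Q Q' X).trans (sδ' Q Q' X).symm)
  rfl

end StrictMonoidalLift

/-! ### The bijection -/

theorem ActionDistribLaw.σ_toLift (d : ActionDistribLaw L T) (Q : C) (X : T.Algebra) :
    d.toLift.σ Q X = d.ℓ Q X.A ≫ (L.obj Q).map X.a :=
  (Category.id_comp _).trans (Category.comp_id _)

/-- The bijection between distributive laws and strict monoidal lifts, given by the two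
constructions above. -/
def distribLawEquivLift : ActionDistribLaw L T ≃ StrictMonoidalLift L T where
  toFun d := d.toLift
  invFun lf := lf.toLaw
  left_inv d := by
    have h : d.toLift.law = d.ℓ := by
      funext Q A
      have h : d.toLift.σF Q A = d.ℓ Q ((T : M ⥤ M).obj A) ≫ (L.obj Q).map (T.μ.app A) :=
        d.σ_toLift Q (T.free.obj A)
      have hη : (T : M ⥤ M).map (T.η.app A) ≫ T.μ.app A = 𝟙 ((T : M ⥤ M).obj A) := T.right_unit A
      rw [StrictMonoidalLift.law, h, d.natM_assoc, ← Functor.map_comp, hη,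
        CategoryTheory.Functor.map_id, Category.comp_id]
    cases d
    simpa [StrictMonoidalLift.toLaw] using h
  right_inv lf := StrictMonoidalLift.ext_σ fun Q X => by
    rw [ActionDistribLaw.σ_toLift]
    exact lf.law_comp Q X

end

/-- Main theorem: Distributive laws from a right action `L` of a
monoidal category `C` on a category `M` to a monad `T` on `M` are in bijective
correspondence with strict monoidal lifts of `L` along the forgetful functor
`U : 𝓜^T ⥤ 𝓜`. The bijection sends a distributive law `ℓ` to the lift determined by
`L̃ℓ(Q)(A, ν) = (A ⋄ Q, L(Q)(ν) ∘ ℓ^Q_A)` (with morphisms and monoidal structure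
morphisms lifted identically), and its inverse sends a strict monoidal lift `L̃` to the
family `ℓ^Q_A := σ^Q_{F A} ∘ T (L(Q)(η_A))`, where `σ^Q_X` is the structure morphism of
`L̃(Q)(X)` and `F A = (T A, μ_A)` is the free `T`-algebra. -/
theorem stmt_15 (L : C ⥤ M ⥤ M) [L.Monoidal] (T : Monad M) :
    ∃ e : ActionDistribLaw L T ≃ StrictMonoidalLift L T,
      (∀ (d : ActionDistribLaw L T) (Q : C) (X : T.Algebra),
        (((e d).lift.obj Q).obj X).a
          = eqToHom (congrArg (T : M ⥤ M).obj (Functor.congr_obj ((e d).strict Q) X))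
            ≫ (d.ℓ Q X.A ≫ (L.obj Q).map X.a)
            ≫ eqToHom (Functor.congr_obj ((e d).strict Q) X).symm) ∧
      (∀ (d : ActionDistribLaw L T) (Q : C) {X Y : T.Algebra} (f : X ⟶ Y),
        (((e d).lift.obj Q).map f).f
          = eqToHom (Functor.congr_obj ((e d).strict Q) X) ≫ (L.obj Q).map f.f
            ≫ eqToHom (Functor.congr_obj ((e d).strict Q) Y).symm) ∧
      (∀ (lf : StrictMonoidalLift L T) (Q : C) (A : M),
        (e.symm lf).ℓ Q A
          = (T : M ⥤ M).map ((L.obj Q).map (T.η.app A))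
            ≫ eqToHom (congrArg (T : M ⥤ M).obj
                (Functor.congr_obj (lf.strict Q) (T.free.obj A))).symm
            ≫ ((lf.lift.obj Q).obj (T.free.obj A)).a
            ≫ eqToHom (Functor.congr_obj (lf.strict Q) (T.free.obj A))) := by
  refine ⟨distribLawEquivLift, fun d Q X => ?_, fun d Q X Y f => ?_, fun lf Q A => rfl⟩
  · exact ((Category.id_comp _).trans (Category.comp_id _)).symm
  · exact ((Category.id_comp _).trans (Category.comp_id _)).symm
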